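/- arXiv:2104.07729 — 2 statements merged into one kernel-verified Lean document; each statement's English description precedes it below -/
import Mathlib

section
/- Let k ≥ 3 be an integer and let C, a, b be fixed nonnegative integers. For all sufficiently large n (depending on k, C, a, b), if G is an n-vertex W_{2k+1}-free simple graph attaining the maximum spectral radius among all n-vertex W_{2k+1}-free graphs, V(G) = S ⊔ T is a maximum cut of G, and there exists a set of at most C edges of G whose removal leaves the induced subgraph on S with maximum degree at most a and the induced subgraph on T with maximum degree at most b, then a + b ≥ k − 1; moreover, if C = 0 then a + b ≥ k. -/
/-- The wheel graph on `t` vertices: vertex `0` joined to every vertex of the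
cycle `1, 2, …, t-1` (with `t-1` adjacent to `1`). -/
def wheelGraph (t : ℕ) : SimpleGraph (Fin t) where
  Adj a b := a ≠ b ∧ (a.val = 0 ∨ b.val = 0 ∨ a.val + 1 = b.val ∨ b.val + 1 = a.val ∨
      (a.val = 1 ∧ b.val = t - 1) ∨ (b.val = 1 ∧ a.val = t - 1))
  symm := by
    constructor
    intro a b h
    exact ⟨h.1.symm, by tauto⟩
  loopless := by
    constructor
    intro a h
    exact h.1 rfl

/-- `G` contains a copy of `F`, i.e. a subgraph isomorphic to `F`. -/
def ContainsCopy {α β : Type*} (F : SimpleGraph α) (G : SimpleGraph β) : Prop :=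
  ∃ f : α ↪ β, ∀ a b, F.Adj a b → G.Adj (f a) (f b)

/-- `G` is `W_t`-free: it contains no subgraph isomorphic to the wheel on `t` vertices. -/
def WheelFree (t : ℕ) {n : ℕ} (G : SimpleGraph (Fin n)) : Prop :=
  ¬ ContainsCopy (wheelGraph t) G

/-- The spectral radius of `G`: the largest eigenvalue of its adjacency matrix. -/
noncomputable def lam1 {n : ℕ} (G : SimpleGraph (Fin n)) : ℝ := by
  classical
  exact sSup {μ : ℝ | Module.End.HasEigenvalue (Matrix.toLin' (G.adjMatrix ℝ)) μ}

/-- The number of edges of a graph on a finite vertex type. -/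
noncomputable def edgeCount {V : Type*} [Fintype V] (G : SimpleGraph V) : ℕ := by
  classical
  exact G.edgeFinset.card

/-- The degree of a vertex. -/
noncomputable def deg {n : ℕ} (G : SimpleGraph (Fin n)) (v : Fin n) : ℕ := by
  classical
  exact G.degree v

/-- The number of neighbours of `v` inside the set `A`. -/
noncomputable def degIn {n : ℕ} (G : SimpleGraph (Fin n)) (A : Finset (Fin n)) (v : Fin n) : ℕ := by
  classical
  exact (A.filter fun u => G.Adj v u).card

/-- The number of edges of `G` with one endpoint in `S` and the other outside `S`. -/
noncomputable def cutCount {n : ℕ} (G : SimpleGraph (Fin n)) (S : Finset (Fin n)) : ℕ := by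
  classical
  exact ((Finset.univ : Finset (Fin n × Fin n)).filter
    fun p => G.Adj p.1 p.2 ∧ p.1 ∈ S ∧ p.2 ∉ S).card

/-- `(S, T)` is a maximum cut of `G`. -/
def IsMaxCut {n : ℕ} (G : SimpleGraph (Fin n)) (S T : Finset (Fin n)) : Prop :=
  T = Sᶜ ∧ ∀ S' : Finset (Fin n), cutCount G S' ≤ cutCount G S

/-- `G` attains the maximum spectral radius among all `n`-vertex `W_t`-free graphs. -/
def IsSpexWheel (t : ℕ) {n : ℕ} (G : SimpleGraph (Fin n)) : Prop :=
  WheelFree t G ∧ ∀ H : SimpleGraph (Fin n), WheelFree t H → lam1 H ≤ lam1 G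

/-- `G` attains the maximum number of edges among all `n`-vertex `W_t`-free graphs. -/
def IsExWheel (t : ℕ) {n : ℕ} (G : SimpleGraph (Fin n)) : Prop :=
  WheelFree t G ∧ ∀ H : SimpleGraph (Fin n), WheelFree t H → edgeCount H ≤ edgeCount G

/-!
Deleting the `C` exceptional edges leaves a graph whose quadratic form is bounded, block by block
along `S ⊔ T`, by the matrix `[[a, n/2], [n/2, b]]`. The deleted edges contribute only `O(C/n)`,
because an eigenvector for an eigenvalue of order `n` has all its squared entries of order `1/n`.
Hence `λ₁(G) ≤ n/2 + (a + b)/2 + O(1/n)`.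

On the other side, join a `(k - 1)`-regular graph whose components have at most `2k - 2` vertices
with a graph having a single edge, on nearly equal parts. A wheel `W_{2k+1}` with hub in the first
part would need two rim edges in the second, and one with hub in the second part a path on `2k - 1`
vertices in the first, so the join is wheel-free. Its spectral radius is at least that of the block
matrix for `(k - 1, 0)` plus a contribution of about `2/n` from the extra edge; this beats the loss
of at most about `1/n` caused by unequal parts, which is what excludes `a + b = k - 1` when `C = 0`.
-/

open scoped Matrix

theorem top_between_compl_adj {V : Type*} (S : Set V) (u v : V) :
    ((⊤ : SimpleGraph V).between S Sᶜ).Adj u v ↔ (u ∈ S ↔ v ∉ S) := by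
  have hne : (u ∈ S ↔ v ∉ S) → u ≠ v := by rintro h rfl; tauto
  simp only [SimpleGraph.between_adj, SimpleGraph.top_adj, Set.mem_compl_iff]
  tauto

theorem ncard_neighborSet_eq_degree {V : Type*} (G : SimpleGraph V) (v : V)
    [Fintype (G.neighborSet v)] : (G.neighborSet v).ncard = G.degree v := by
  rw [Set.ncard_eq_toFinset_card', SimpleGraph.degree, SimpleGraph.neighborFinset]

theorem sum_ncard_neighborSet {V : Type*} [Fintype V] (G : SimpleGraph V) :
    ∑ v, (G.neighborSet v).ncard = 2 * G.edgeSet.ncard := by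
  classical
  simp only [ncard_neighborSet_eq_degree]
  rw [G.sum_degrees_eq_twice_card_edges, ← SimpleGraph.coe_edgeFinset, Set.ncard_coe_finset]

section AdjForm

variable {V : Type*} [Fintype V]

theorem dotProduct_mulVec_le_sSup_spectrum [DecidableEq V] {A : Matrix V V ℝ}
    (hA : A.IsHermitian) (x : V → ℝ) :
    x ⬝ᵥ A *ᵥ x ≤ sSup (spectrum ℝ A) * (x ⬝ᵥ x) := by
  have hpos : (algebraMap ℝ (Matrix V V ℝ) (sSup (spectrum ℝ A)) - A).PosSemidef := by
    refine Matrix.posSemidef_iff_isHermitian_and_spectrum_nonneg.2 ⟨?_, ?_⟩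
    · refine Matrix.IsHermitian.sub ?_ hA
      rw [Matrix.IsHermitian, Matrix.conjTranspose_eq_transpose_of_trivial,
        Matrix.algebraMap_eq_diagonal, Matrix.diagonal_transpose]
    · rw [← spectrum.singleton_sub_eq, Set.singleton_sub]
      rintro _ ⟨μ, hμ, rfl⟩
      exact sub_nonneg.2 (le_csSup A.finite_real_spectrum.bddAbove hμ)
  have h := hpos.dotProduct_mulVec_nonneg x
  simpa [Matrix.sub_mulVec, dotProduct_sub, Algebra.algebraMap_eq_smul_one, Matrix.smul_mulVec]
    using h

theorem exists_mulVec_eq_sSup_spectrum_smul [DecidableEq V] [Nonempty V] {A : Matrix V V ℝ}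
    (hA : A.IsHermitian) : ∃ x ≠ 0, A *ᵥ x = sSup (spectrum ℝ A) • x := by
  have hne : (spectrum ℝ A).Nonempty :=
    hA.spectrum_real_eq_range_eigenvalues ▸ Set.range_nonempty _
  have hmem := hne.csSup_mem A.finite_real_spectrum
  rw [← Matrix.spectrum_toLin', ← Module.End.hasEigenvalue_iff_mem_spectrum] at hmem
  obtain ⟨x, hx⟩ := hmem.exists_hasEigenvector
  exact ⟨x, hx.2, by simpa using hx.apply_eq_smul⟩

open scoped Classical in
/-- The quadratic form `xᵀ A x` of the adjacency matrix `A` of `G`. -/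
noncomputable def adjForm (G : SimpleGraph V) (x : V → ℝ) : ℝ :=
  ∑ u, ∑ v, if G.Adj u v then x u * x v else 0

theorem adjForm_eq_dotProduct_mulVec (G : SimpleGraph V) [DecidableRel G.Adj] (x : V → ℝ) :
    adjForm G x = x ⬝ᵥ G.adjMatrix ℝ *ᵥ x := by
  rw [G.dotProduct_mulVec_adjMatrix, adjForm]
  congr!

theorem adjForm_sup_of_disjoint {G H : SimpleGraph V} (h : Disjoint G H) (x : V → ℝ) :
    adjForm (G ⊔ H) x = adjForm G x + adjForm H x := by
  simp only [adjForm, ← Finset.sum_add_distrib]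
  refine Finset.sum_congr rfl fun u _ => Finset.sum_congr rfl fun v _ => ?_
  have hGH : G.Adj u v → ¬H.Adj u v := SimpleGraph.disjoint_left.1 h u v
  by_cases hG : G.Adj u v <;> by_cases hH : H.Adj u v
  · exact absurd hH (hGH hG)
  all_goals simp [hG, hH]

theorem adjForm_inf_add_adjForm_sdiff (G H : SimpleGraph V) (x : V → ℝ) :
    adjForm (G ⊓ H) x + adjForm (G \ H) x = adjForm G x := by
  rw [← adjForm_sup_of_disjoint disjoint_inf_sdiff, sup_inf_sdiff]

theorem adjForm_le_adjForm_abs {G H : SimpleGraph V} (h : G ≤ H) (x : V → ℝ) :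
    adjForm G x ≤ adjForm H |x| := by
  refine Finset.sum_le_sum fun u _ => Finset.sum_le_sum fun v _ => ?_
  have habs : x u * x v ≤ |x| u * |x| v := by simpa [abs_mul] using le_abs_self (x u * x v)
  have hnonneg : 0 ≤ |x| u * |x| v := mul_nonneg (abs_nonneg _) (abs_nonneg _)
  split_ifs with hG hH hH
  exacts [habs, absurd (h hG) hH, hnonneg, le_rfl]

theorem adjForm_le_sum_ncard_neighborSet_mul_sq (G : SimpleGraph V) (x : V → ℝ) :
    adjForm G x ≤ ∑ v, (G.neighborSet v).ncard * x v ^ 2 := by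
  classical
  have h := (G.posSemidef_lapMatrix ℝ).dotProduct_mulVec_nonneg x
  rw [SimpleGraph.lapMatrix, Matrix.sub_mulVec, dotProduct_sub, star_trivial,
    G.dotProduct_mulVec_degMatrix, ← adjForm_eq_dotProduct_mulVec, sub_nonneg] at h
  simpa only [ncard_neighborSet_eq_degree, mul_assoc, ← sq] using h

theorem adjForm_le_two_mul_ncard_edgeSet_mul (G : SimpleGraph V) {x : V → ℝ} {M : ℝ}
    (hx : ∀ v, x v ^ 2 ≤ M) : adjForm G x ≤ 2 * G.edgeSet.ncard * M :=
  calc adjForm G x ≤ ∑ v, (G.neighborSet v).ncard * x v ^ 2 :=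
      adjForm_le_sum_ncard_neighborSet_mul_sq G x
    _ ≤ ∑ v, (G.neighborSet v).ncard * M := by gcongr with v; exact hx v
    _ = 2 * G.edgeSet.ncard * M := by
      rw [← Finset.sum_mul, ← Nat.cast_sum, sum_ncard_neighborSet]
      push_cast
      rfl

theorem adjForm_const (G : SimpleGraph V) (c : ℝ) :
    adjForm G (fun _ => c) = (∑ v, (G.neighborSet v).ncard : ℕ) * c ^ 2 := by
  classical
  rw [adjForm_eq_dotProduct_mulVec, dotProduct, Nat.cast_sum, Finset.sum_mul]
  refine Finset.sum_congr rfl fun v _ => ?_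
  rw [SimpleGraph.adjMatrix_mulVec_apply, Finset.sum_const, nsmul_eq_mul,
    ncard_neighborSet_eq_degree, SimpleGraph.card_neighborFinset_eq_degree]
  ring

theorem adjForm_top_between_compl [DecidableEq V] (S : Finset V) (x : V → ℝ) :
    adjForm ((⊤ : SimpleGraph V).between S (S : Set V)ᶜ) x =
      2 * ((∑ v ∈ S, x v) * ∑ v ∈ Sᶜ, x v) := by
  simp only [adjForm, top_between_compl_adj, Finset.mem_coe, ← Finset.mem_compl]
  rw [← Finset.sum_add_sum_compl S, two_mul]
  congr 1
  · rw [Finset.sum_mul_sum]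
    refine Finset.sum_congr rfl fun u hu => ?_
    simp only [hu, true_iff, Finset.sum_ite_mem, Finset.univ_inter]
  · rw [mul_comm, Finset.sum_mul_sum]
    refine Finset.sum_congr rfl fun u hu => ?_
    simp only [Finset.mem_compl.1 hu, false_iff, Finset.mem_compl, not_not, Finset.sum_ite_mem,
      Finset.univ_inter]

end AdjForm

theorem lam1_eq_sSup_spectrum {n : ℕ} (G : SimpleGraph (Fin n)) [DecidableRel G.Adj] :
    lam1 G = sSup (spectrum ℝ (G.adjMatrix ℝ)) := by
  rw [lam1, ← Matrix.spectrum_toLin']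
  congr! 1
  ext μ
  rw [Set.mem_ofPred_eq, Module.End.hasEigenvalue_iff_mem_spectrum]
  congr!

theorem adjForm_le_lam1_mul {n : ℕ} (G : SimpleGraph (Fin n)) (x : Fin n → ℝ) :
    adjForm G x ≤ lam1 G * ∑ v, x v ^ 2 := by
  classical
  rw [adjForm_eq_dotProduct_mulVec, lam1_eq_sSup_spectrum]
  simpa only [dotProduct, ← sq] using
    dotProduct_mulVec_le_sSup_spectrum (G.isHermitian_adjMatrix (R := ℝ)) x

section BlockRadius

/-- The larger eigenvalue of the matrix `[[a, √m], [√m, b]]`, i.e. the larger root `θ` of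
`(θ - a) (θ - b) = m`. -/
noncomputable def blockRadius (a b m : ℝ) : ℝ :=
  (a + b) / 2 + √((a - b) ^ 2 / 4 + m)

variable {a b m : ℝ}

theorem blockRadius_sub_mul_sub (hm : 0 ≤ m) :
    (blockRadius a b m - a) * (blockRadius a b m - b) = m := by
  have h := Real.sq_sqrt (show 0 ≤ (a - b) ^ 2 / 4 + m by positivity)
  rw [blockRadius]
  linear_combination h

theorem left_le_blockRadius (hm : 0 ≤ m) : a ≤ blockRadius a b m := by
  have h : (a - b) / 2 ≤ √((a - b) ^ 2 / 4 + m) := Real.le_sqrt_of_sq_le (by linarith)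
  rw [blockRadius]
  linarith

theorem right_le_blockRadius (hm : 0 ≤ m) : b ≤ blockRadius a b m := by
  have h : (b - a) / 2 ≤ √((a - b) ^ 2 / 4 + m) := Real.le_sqrt_of_sq_le (by linarith)
  rw [blockRadius]
  linarith

theorem block_form_le_blockRadius_mul (hm : 0 ≤ m) {X Y Z : ℝ} (hX : 0 ≤ X) (hY : 0 ≤ Y)
    (hZ : Z ^ 2 ≤ m * (X * Y)) :
    a * X + b * Y + 2 * Z ≤ blockRadius a b m * (X + Y) := by
  set θ := blockRadius a b m
  have hU : 0 ≤ (θ - a) * X := mul_nonneg (sub_nonneg.2 (left_le_blockRadius hm)) hX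
  have hW : 0 ≤ (θ - b) * Y := mul_nonneg (sub_nonneg.2 (right_le_blockRadius hm)) hY
  have hUW : (2 * Z) ^ 2 ≤ ((θ - a) * X + (θ - b) * Y) ^ 2 := by
    have hprod : (θ - a) * X * ((θ - b) * Y) = m * (X * Y) := by
      rw [← blockRadius_sub_mul_sub (a := a) (b := b) hm]
      ring
    linarith [sq_nonneg ((θ - a) * X - (θ - b) * Y)]
  linarith [le_of_sq_le_sq hUW (add_nonneg hU hW)]

theorem blockRadius_zero_right_le {d : ℝ} (hd : 0 ≤ d) (hm : 0 ≤ m) :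
    blockRadius d 0 m ≤ d + √m := by
  have h : √((d - 0) ^ 2 / 4 + m) ≤ d / 2 + √m := by
    refine Real.sqrt_le_iff.2 ⟨by positivity, ?_⟩
    nlinarith [Real.sq_sqrt hm, Real.sqrt_nonneg m]
  rw [blockRadius]
  linarith

theorem blockRadius_le_blockRadius_zero_right {d m' : ℝ} (ha : 0 ≤ a) (hb : 0 ≤ b)
    (hd : a + b ≤ d) (hm : m ≤ m' + 1) (hm' : 0 < m') :
    blockRadius a b m ≤ blockRadius d 0 m' + (a + b - d) / 2 + 1 / (2 * √m') := by
  set ρ := √((d - 0) ^ 2 / 4 + m')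
  have hρ : √m' ≤ ρ := Real.sqrt_le_sqrt (by nlinarith)
  have hsqrt : √((a - b) ^ 2 / 4 + m) ≤ ρ + 1 / (2 * √m') := by
    refine Real.sqrt_le_iff.2 ⟨by positivity, ?_⟩
    have hρsq : ρ ^ 2 = (d - 0) ^ 2 / 4 + m' := Real.sq_sqrt (by positivity)
    have hab : (a - b) ^ 2 ≤ d ^ 2 := by nlinarith
    have hcross : 1 ≤ 2 * ρ * (1 / (2 * √m')) := by
      rw [mul_one_div, le_div_iff₀ (by positivity)]
      linarith
    nlinarith [sq_nonneg (1 / (2 * √m'))]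
  rw [blockRadius, blockRadius]
  linarith

end BlockRadius

section UpperBound

theorem sq_mul_sq_le_of_adjMatrix_mulVec_eq_smul {V : Type*} [Fintype V] {G : SimpleGraph V}
    [DecidableRel G.Adj] {μ : ℝ} {x : V → ℝ} (hx : G.adjMatrix ℝ *ᵥ x = μ • x) (v : V) :
    μ ^ 2 * x v ^ 2 ≤ Fintype.card V * ∑ u, x u ^ 2 := by
  have hv : ∑ u ∈ G.neighborFinset v, x u = μ * x v := by
    rw [← SimpleGraph.adjMatrix_mulVec_apply, hx, Pi.smul_apply, smul_eq_mul]
  calc μ ^ 2 * x v ^ 2 = (∑ u ∈ G.neighborFinset v, x u) ^ 2 := by rw [hv, mul_pow]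
    _ ≤ (G.neighborFinset v).card * ∑ u ∈ G.neighborFinset v, x u ^ 2 :=
      sq_sum_le_card_mul_sum_sq
    _ ≤ Fintype.card V * ∑ u, x u ^ 2 := by
      gcongr
      · exact Finset.card_le_univ _
      · exact Finset.subset_univ _

theorem sq_sum_mul_sum_compl_le {V : Type*} [Fintype V] [DecidableEq V] (S : Finset V)
    (x : V → ℝ) :
    ((∑ v ∈ S, x v) * ∑ v ∈ Sᶜ, x v) ^ 2 ≤
      (Fintype.card V : ℝ) ^ 2 / 4 * ((∑ v ∈ S, x v ^ 2) * ∑ v ∈ Sᶜ, x v ^ 2) := by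
  have hcard : (S.card : ℝ) * Sᶜ.card ≤ (Fintype.card V : ℝ) ^ 2 / 4 := by
    rw [← S.card_add_card_compl]
    push_cast
    linarith [four_mul_le_sq_add (S.card : ℝ) Sᶜ.card]
  calc _ ≤ (S.card * ∑ v ∈ S, x v ^ 2) * (Sᶜ.card * ∑ v ∈ Sᶜ, x v ^ 2) := by
        rw [mul_pow]
        gcongr <;> exact sq_sum_le_card_mul_sum_sq
    _ = (S.card * Sᶜ.card) * ((∑ v ∈ S, x v ^ 2) * ∑ v ∈ Sᶜ, x v ^ 2) := by ring
    _ ≤ _ := by gcongr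

variable {n a b : ℕ} {S : Finset (Fin n)}

theorem ncard_neighborSet_sdiff_between_compl (G : SimpleGraph (Fin n)) (v : Fin n) :
    ((G \ (⊤ : SimpleGraph (Fin n)).between S (S : Set (Fin n))ᶜ).neighborSet v).ncard =
      if v ∈ S then degIn G S v else degIn G Sᶜ v := by
  rw [degIn, degIn, ← apply_ite Finset.card, ← Set.ncard_coe_finset]
  congr 1
  ext u
  split_ifs with hv <;>
    simp [top_between_compl_adj, hv, and_comm]

theorem adjForm_le_blockRadius_mul {G : SimpleGraph (Fin n)}
    (hS : ∀ v ∈ S, degIn G S v ≤ a) (hT : ∀ v ∈ Sᶜ, degIn G Sᶜ v ≤ b) (x : Fin n → ℝ) :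
    adjForm G x ≤ blockRadius a b ((n : ℝ) ^ 2 / 4) * ∑ v, x v ^ 2 := by
  classical
  set B := (⊤ : SimpleGraph (Fin n)).between S (S : Set (Fin n))ᶜ
  have hcross : adjForm (G ⊓ B) x ≤ 2 * ((∑ v ∈ S, |x| v) * ∑ v ∈ Sᶜ, |x| v) :=
    (adjForm_le_adjForm_abs inf_le_right x).trans_eq (adjForm_top_between_compl S |x|)
  have hsq := sq_sum_mul_sum_compl_le S |x|
  simp only [Fintype.card_fin, Pi.abs_apply, sq_abs] at hsq
  have hinner : adjForm (G \ B) x ≤ a * ∑ v ∈ S, x v ^ 2 + b * ∑ v ∈ Sᶜ, x v ^ 2 := by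
    refine (adjForm_le_sum_ncard_neighborSet_mul_sq _ x).trans ?_
    rw [← Finset.sum_add_sum_compl S, Finset.mul_sum, Finset.mul_sum]
    refine add_le_add (Finset.sum_le_sum fun v hv => ?_) (Finset.sum_le_sum fun v hv => ?_) <;>
      rw [ncard_neighborSet_sdiff_between_compl]
    · rw [if_pos hv]
      gcongr
      exact hS v hv
    · rw [if_neg (Finset.mem_compl.1 hv)]
      gcongr
      exact hT v hv
  have hblock := block_form_le_blockRadius_mul (a := a) (b := b) (by positivity)
    (Finset.sum_nonneg fun v _ => sq_nonneg (x v)) (Finset.sum_nonneg fun v _ => sq_nonneg (x v))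
    hsq
  rw [Finset.sum_add_sum_compl] at hblock
  simp only [Pi.abs_apply] at hcross
  linarith [adjForm_inf_add_adjForm_sdiff G B x]

theorem adjForm_le_adjForm_deleteEdges_add {V : Type*} [Fintype V] (G : SimpleGraph V)
    (E : Finset (Sym2 V)) {x : V → ℝ} {M : ℝ} (hM : 0 ≤ M) (hx : ∀ v, x v ^ 2 ≤ M) :
    adjForm G x ≤ adjForm (G.deleteEdges E) x + 2 * E.card * M := by
  classical
  set F := SimpleGraph.fromEdgeSet (E : Set (Sym2 V))
  have hcard : (G ⊓ F).edgeSet.ncard ≤ E.card := by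
    rw [← Set.ncard_coe_finset]
    refine Set.ncard_le_ncard ((SimpleGraph.edgeSet_mono inf_le_right).trans ?_)
    exact SimpleGraph.edgeSet_fromEdgeSet _ ▸ Set.sdiff_subset
  have hdel : adjForm (G ⊓ F) x ≤ 2 * E.card * M :=
    (adjForm_le_two_mul_ncard_edgeSet_mul _ hx).trans (by gcongr)
  rw [← adjForm_inf_add_adjForm_sdiff G F, SimpleGraph.deleteEdges]
  linarith

theorem exists_adjForm_eq_lam1_mul_sum_sq (hn : 0 < n) {G : SimpleGraph (Fin n)}
    (hG : (n : ℝ) / 2 ≤ lam1 G) :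
    ∃ x : Fin n → ℝ, 0 < ∑ v, x v ^ 2 ∧ adjForm G x = lam1 G * ∑ v, x v ^ 2 ∧
      ∀ v, x v ^ 2 ≤ 4 * (∑ v, x v ^ 2) / n := by
  classical
  have : NeZero n := ⟨hn.ne'⟩
  obtain ⟨x, hx0, hx⟩ := exists_mulVec_eq_sSup_spectrum_smul (G.isHermitian_adjMatrix (R := ℝ))
  rw [← lam1_eq_sSup_spectrum] at hx
  refine ⟨x, ?_, ?_, fun v => ?_⟩
  · obtain ⟨v, hv⟩ := Function.ne_iff.1 hx0
    exact Finset.sum_pos' (fun v _ => sq_nonneg _) ⟨v, Finset.mem_univ v, sq_pos_of_ne_zero hv⟩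
  · rw [adjForm_eq_dotProduct_mulVec, hx, dotProduct_smul, smul_eq_mul]
    simp only [dotProduct, ← sq]
  · have hdeloc := sq_mul_sq_le_of_adjMatrix_mulVec_eq_smul hx v
    rw [Fintype.card_fin] at hdeloc
    have hhalf : ((n : ℝ) / 2) ^ 2 * x v ^ 2 ≤ n * ∑ v, x v ^ 2 := le_trans (by gcongr) hdeloc
    rw [le_div_iff₀ (by positivity)]
    refine le_of_mul_le_mul_left ?_ (show (0 : ℝ) < n by positivity)
    linarith

theorem lam1_le_blockRadius_add {C : ℕ} (hn : 0 < n) {G : SimpleGraph (Fin n)}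
    {E : Finset (Sym2 (Fin n))} (hE : E.card ≤ C)
    (hS : ∀ v ∈ S, degIn (G.deleteEdges E) S v ≤ a)
    (hT : ∀ v ∈ Sᶜ, degIn (G.deleteEdges E) Sᶜ v ≤ b) :
    lam1 G ≤ blockRadius a b ((n : ℝ) ^ 2 / 4) + 8 * C / n := by
  rcases le_total (lam1 G) (n / 2) with hsmall | hlarge
  · have hsqrt : (n : ℝ) / 2 ≤ √(((a : ℝ) - b) ^ 2 / 4 + (n : ℝ) ^ 2 / 4) :=
      Real.le_sqrt_of_sq_le (by linarith [sq_nonneg ((a : ℝ) - b)])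
    have hnonneg : (0 : ℝ) ≤ (a + b) / 2 + 8 * C / n := by positivity
    rw [blockRadius]
    linarith
  obtain ⟨x, hpos, hform, hdeloc⟩ := exists_adjForm_eq_lam1_mul_sum_sq hn hlarge
  set Q := ∑ v, x v ^ 2
  refine le_of_mul_le_mul_right ?_ hpos
  calc lam1 G * Q ≤ adjForm (G.deleteEdges E) x + 2 * E.card * (4 * Q / n) :=
        hform ▸ adjForm_le_adjForm_deleteEdges_add G E (by positivity) hdeloc
    _ ≤ blockRadius a b ((n : ℝ) ^ 2 / 4) * Q + 2 * C * (4 * Q / n) := by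
        gcongr
        exact adjForm_le_blockRadius_mul hS hT x
    _ = (blockRadius a b ((n : ℝ) ^ 2 / 4) + 8 * C / n) * Q := by ring

end UpperBound

section Wheel

theorem exists_rim_of_containsCopy_wheelGraph {V : Type*} {G : SimpleGraph V} {t : ℕ} (ht : 2 ≤ t)
    (h : ContainsCopy (wheelGraph (t + 1)) G) :
    ∃ v, ∃ g : ZMod t → V, Function.Injective g ∧ (∀ i, G.Adj v (g i)) ∧
      ∀ i, G.Adj (g i) (g (i + 1)) := by
  obtain ⟨f, hf⟩ := h
  have : NeZero t := ⟨by lia⟩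
  have hone : (1 : ZMod t).val = 1 := ZMod.val_one'' (by lia)
  refine ⟨f 0, fun i => f ⟨i.val + 1, Nat.succ_lt_succ i.val_lt⟩, fun i j hij => ?_,
    fun i => hf _ _ ?_, fun i => hf _ _ ?_⟩
  · exact ZMod.val_injective t (by simpa using f.injective hij)
  · simp [wheelGraph, Fin.ext_iff, -Fin.val_eq_zero_iff]
  · have hval := ZMod.val_add i 1
    have hi := i.val_lt
    rw [hone] at hval
    simp only [wheelGraph, ne_eq, Fin.mk.injEq]
    rcases (Nat.succ_le_of_lt hi).lt_or_eq with hlt | heq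
    · rw [Nat.mod_eq_of_lt hlt] at hval
      lia
    · rw [show i.val + 1 = t from heq, Nat.mod_self] at hval
      lia

theorem rim_edge_injective {V : Type*} {t : ℕ} (ht : 3 ≤ t) {g : ZMod t → V}
    (hg : Function.Injective g) : Function.Injective fun i => s(g i, g (i + 1)) := by
  intro i j hij
  have htwo : (2 : ZMod t) ≠ 0 := fun h =>
    absurd (Nat.le_of_dvd two_pos ((ZMod.natCast_eq_zero_iff 2 t).1 h)) (by lia)
  rcases Sym2.eq_iff.1 hij with ⟨h, -⟩ | ⟨h₁, h₂⟩
  · exact hg h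
  · exact absurd (show (2 : ZMod t) = 0 by linear_combination hg h₂ - hg h₁) htwo

theorem zmod_forall_ne_of_succ {t : ℕ} [NeZero t] {i₀ : ZMod t} {P : ZMod t → Prop}
    (hbase : P (i₀ + 1)) (hstep : ∀ i ≠ i₀, P i → i + 1 ≠ i₀ → P (i + 1)) :
    ∀ i ≠ i₀, P i := by
  have hne (m : ℕ) (hm : m + 1 < t) : i₀ + (m + 1 : ℕ) ≠ i₀ := fun h =>
    absurd (Nat.le_of_dvd m.succ_pos ((ZMod.natCast_eq_zero_iff _ t).1 (add_eq_left.1 h))) hm.not_ge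
  have hP (m : ℕ) (hm : m + 1 < t) : P (i₀ + (m + 1 : ℕ)) := by
    induction m with
    | zero => simpa using hbase
    | succ m ih =>
      have h := hstep _ (hne m (by lia)) (ih (by lia))
      rw [add_assoc, ← Nat.cast_succ] at h
      exact h (hne (m + 1) hm)
  intro i hi
  have hval : (i - i₀).val ≠ 0 := by rwa [ne_eq, ZMod.val_eq_zero, sub_eq_zero]
  have hi' := hP ((i - i₀).val - 1)
  rw [Nat.sub_add_cancel (Nat.one_le_iff_ne_zero.2 hval), ZMod.natCast_zmod_val,
    add_sub_cancel] at hi'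
  exact hi' (ZMod.val_lt _)

theorem exists_ne_notMem_and_add_one_notMem {t : ℕ} [NeZero t] {A : Finset (ZMod t)}
    (hA : 2 * A.card + 2 ≤ t) :
    ∃ i j, i ≠ j ∧ (i ∉ A ∧ i + 1 ∉ A) ∧ j ∉ A ∧ j + 1 ∉ A := by
  have hB : 1 < (A ∪ A.image (· - 1))ᶜ.card := by
    have h₁ := Finset.card_union_le A (A.image (· - 1))
    have h₂ := A.card_image_le (f := (· - 1))
    have h₃ := (A ∪ A.image (· - 1)).card_add_card_compl
    rw [ZMod.card] at h₃
    lia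
  obtain ⟨i, hi, j, hj, hij⟩ := Finset.one_lt_card.1 hB
  simp only [Finset.mem_compl, Finset.mem_union, Finset.mem_image, sub_eq_iff_eq_add,
    exists_eq_right, not_or] at hi hj
  exact ⟨i, j, hij, hi, hj⟩

end Wheel

section Join

variable {α β : Type*} {R : SimpleGraph α} {F : SimpleGraph β}

/-- The join of two graphs: their disjoint union together with all edges between them. -/
def joinGraph (R : SimpleGraph α) (F : SimpleGraph β) : SimpleGraph (α ⊕ β) :=
  (R ⊕g F) ⊔ completeBipartiteGraph α β

@[simp]
theorem joinGraph_adj_inl_inl {u v : α} : (joinGraph R F).Adj (.inl u) (.inl v) ↔ R.Adj u v := by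
  simp [joinGraph]

@[simp]
theorem joinGraph_adj_inr_inr {u v : β} : (joinGraph R F).Adj (.inr u) (.inr v) ↔ F.Adj u v := by
  simp [joinGraph]

@[simp]
theorem joinGraph_adj_inl_inr {u : α} {v : β} : (joinGraph R F).Adj (.inl u) (.inr v) := by
  simp [joinGraph]

@[simp]
theorem joinGraph_adj_inr_inl {u : α} {v : β} : (joinGraph R F).Adj (.inr v) (.inl u) := by
  simp [joinGraph]

theorem not_forall_joinGraph_adj_inl [Finite α] {k : ℕ} (hk : 2 ≤ k) {u : α}
    (hR : (R.neighborSet u).ncard < k) (hF : F.edgeSet.Subsingleton) {g : ZMod (2 * k) → α ⊕ β}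
    (hg : Function.Injective g) (hrim : ∀ i, (joinGraph R F).Adj (g i) (g (i + 1))) :
    ¬∀ i, (joinGraph R F).Adj (.inl u) (g i) := by
  intro hhub
  have : NeZero (2 * k) := ⟨by lia⟩
  set A : Finset (ZMod (2 * k)) := {i | (g i).isLeft}
  have hA : A.card < k := by
    refine lt_of_le_of_lt ?_ hR
    rw [← Set.ncard_image_of_injective _ (Sum.inl_injective (β := β)), ← Set.ncard_coe_finset,
      ← Set.ncard_image_of_injective _ hg]
    refine Set.ncard_le_ncard ?_ (Set.toFinite _)
    rintro _ ⟨i, hi, rfl⟩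
    obtain ⟨w, hw⟩ := Sum.isLeft_iff.1 (Finset.mem_filter.1 hi).2
    exact ⟨w, joinGraph_adj_inl_inl.1 (hw ▸ hhub i), hw.symm⟩
  have hedge (i) (hi : i ∉ A ∧ i + 1 ∉ A) : s(g i, g (i + 1)) ∈ Sym2.map .inr '' F.edgeSet := by
    simp only [A, Finset.mem_filter_univ, Bool.not_eq_true, Sum.isLeft_eq_false,
      Sum.isRight_iff] at hi
    obtain ⟨⟨v, hv⟩, w, hw⟩ := hi
    have hvw := hrim i
    rw [hv, hw, joinGraph_adj_inr_inr] at hvw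
    exact ⟨s(v, w), hvw, by rw [hv, hw, Sym2.map_mk]⟩
  -- Fewer than `k` of the `2k` rim vertices lie in `α`, so at least two rim edges lie in `F`.
  obtain ⟨i, j, hij, hi, hj⟩ := exists_ne_notMem_and_add_one_notMem (A := A) (by lia)
  exact hij (rim_edge_injective (by lia) hg (hF.image _ (hedge i hi) (hedge j hj)))

theorem exists_forall_ne_eq_inl {ι : Type*} [Nonempty ι] (hF : F.edgeSet.Subsingleton) {w : β}
    {g : ι → α ⊕ β} (hg : Function.Injective g) (hhub : ∀ i, (joinGraph R F).Adj (.inr w) (g i)) :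
    ∃ i₀, ∀ i ≠ i₀, ∃ x, g i = .inl x := by
  by_contra! h
  obtain ⟨i, -, hi⟩ := h (Classical.arbitrary ι)
  obtain ⟨j, hji, hj⟩ := h i
  rcases hgi : g i with x | v
  · exact hi x hgi
  rcases hgj : g j with x | v'
  · exact hj x hgj
  have hv := hhub i
  have hv' := hhub j
  rw [hgi, joinGraph_adj_inr_inr] at hv
  rw [hgj, joinGraph_adj_inr_inr] at hv'
  exact hji (hg (by rw [hgi, hgj, Sym2.congr_right.1 (hF hv' hv)]))

theorem not_forall_joinGraph_adj_inr [Finite α] {t : ℕ} (ht : 2 ≤ t)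
    (hR : ∀ c : R.ConnectedComponent, c.supp.ncard + 1 < t) (hF : F.edgeSet.Subsingleton) {w : β}
    {g : ZMod t → α ⊕ β} (hg : Function.Injective g)
    (hrim : ∀ i, (joinGraph R F).Adj (g i) (g (i + 1))) :
    ¬∀ i, (joinGraph R F).Adj (.inr w) (g i) := by
  intro hhub
  have : NeZero t := ⟨by lia⟩
  have : Fact (1 < t) := ⟨ht⟩
  obtain ⟨i₀, hi₀⟩ := exists_forall_ne_eq_inl hF hg hhub
  obtain ⟨x₀, hx₀⟩ := hi₀ (i₀ + 1) (by simp)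
  set c := R.connectedComponentMk x₀
  have hc : ∀ i ≠ i₀, g i ∈ Sum.inl '' c.supp := by
    refine zmod_forall_ne_of_succ ⟨x₀, rfl, hx₀.symm⟩ fun i _ ⟨x, hx, hgx⟩ hi => ?_
    obtain ⟨y, hy⟩ := hi₀ _ hi
    have hxy := hrim i
    rw [← hgx, hy, joinGraph_adj_inl_inl] at hxy
    have hcxy := SimpleGraph.ConnectedComponent.connectedComponentMk_eq_of_adj hxy
    exact ⟨y, hcxy.symm.trans hx, hy.symm⟩
  have hcard : ({i₀}ᶜ : Set (ZMod t)).ncard ≤ c.supp.ncard := by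
    rw [← Set.ncard_image_of_injective _ hg,
      ← Set.ncard_image_of_injective c.supp (Sum.inl_injective (β := β))]
    exact Set.ncard_le_ncard (Set.image_subset_iff.2 hc) (Set.toFinite _)
  rw [Set.ncard_compl, Set.ncard_singleton, Nat.card_zmod] at hcard
  have := hR c
  lia

theorem not_containsCopy_wheelGraph_joinGraph [Finite α] {k : ℕ} (hk : 2 ≤ k)
    (hdeg : ∀ v, (R.neighborSet v).ncard < k)
    (hcomp : ∀ c : R.ConnectedComponent, c.supp.ncard + 1 < 2 * k) (hF : F.edgeSet.Subsingleton) :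
    ¬ContainsCopy (wheelGraph (2 * k + 1)) (joinGraph R F) := by
  intro h
  obtain ⟨u | w, g, hg, hhub, hrim⟩ := exists_rim_of_containsCopy_wheelGraph (by lia) h
  · exact not_forall_joinGraph_adj_inl hk (hdeg u) hF hg hrim hhub
  · exact not_forall_joinGraph_adj_inr (by lia) hcomp hF hg hrim hhub

end Join

section RegularGraph

theorem exists_eq_mul_succ_add_mul_two_mul {p s : ℕ} (hs : Even s) (hps : 2 * p * (p + 1) ≤ s) :
    ∃ a b, s = a * (p + 1) + b * (2 * p) := by
  obtain ⟨h, rfl⟩ := hs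
  -- Modulo `p + 1` we have `p ≡ -1`, so `b ≡ -h` makes `h - p * b` divisible by `p + 1`.
  obtain ⟨b, hb, c, hc⟩ : ∃ b ≤ p, p + 1 ∣ h + b := by
    refine ⟨p - (h + p) % (p + 1), Nat.sub_le _ _, ?_⟩
    have hmod := Nat.mod_lt (h + p) p.succ_pos
    rw [← Nat.add_sub_assoc (by lia)]
    exact Nat.dvd_sub_mod _
  have hbc : b ≤ c := by nlinarith
  obtain ⟨d, rfl⟩ := Nat.exists_eq_add_of_le hbc
  exact ⟨2 * d, b, by linarith⟩

theorem ncard_supp_le_of_forall_ncard_fiber_le {V ι : Type*} [Finite V] {G : SimpleGraph V}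
    {m : ℕ} {f : V → ι} (hf : ∀ u v, G.Adj u v → f u = f v)
    (hm : ∀ i, (f ⁻¹' {i}).ncard ≤ m) (c : G.ConnectedComponent) : c.supp.ncard ≤ m := by
  induction c using SimpleGraph.ConnectedComponent.ind with | _ v
  have hreach (u : V) (hu : G.Reachable u v) : f u = f v := by
    obtain ⟨w⟩ := hu
    induction w with
    | nil => rfl
    | cons h _ ih => exact (hf _ _ h).trans ih
  refine (Set.ncard_le_ncard (fun u hu => ?_)).trans (hm (f v))
  exact hreach u (SimpleGraph.ConnectedComponent.exact hu)

theorem ncard_neighborSet_bot_boxProd {ι V : Type*} (G : SimpleGraph V) (x : ι × V) :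
    (((⊥ : SimpleGraph ι) □ G).neighborSet x).ncard = (G.neighborSet x.2).ncard := by
  rw [SimpleGraph.neighborSet_boxProd, SimpleGraph.neighborSet_bot, Set.empty_prod,
    Set.empty_union, Set.ncard_prod, Set.ncard_singleton, one_mul]

theorem ncard_neighborSet_completeBipartiteGraph_self {V : Type*} (v : V ⊕ V) :
    ((completeBipartiteGraph V V).neighborSet v).ncard = Nat.card V := by
  rcases v with v | v
  · rw [show (completeBipartiteGraph V V).neighborSet (.inl v) = Sum.inr '' Set.univ by
      ext (w | w) <;> simp, Set.ncard_image_of_injective _ Sum.inr_injective, Set.ncard_univ]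
  · rw [show (completeBipartiteGraph V V).neighborSet (.inr v) = Sum.inl '' Set.univ by
      ext (w | w) <;> simp, Set.ncard_image_of_injective _ Sum.inl_injective, Set.ncard_univ]

theorem ncard_supp_bot_boxProd_le {ι V : Type*} [Finite ι] [Finite V] (G : SimpleGraph V)
    (c : ((⊥ : SimpleGraph ι) □ G).ConnectedComponent) : c.supp.ncard ≤ Nat.card V := by
  refine ncard_supp_le_of_forall_ncard_fiber_le (f := Prod.fst) (fun u v h => ?_) (fun i => ?_) c
  · rcases SimpleGraph.boxProd_adj.1 h with ⟨hbot, -⟩ | ⟨-, hfst⟩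
    exacts [hbot.elim, hfst]
  · rw [← Set.prod_univ, Set.ncard_prod, Set.ncard_singleton, one_mul, Set.ncard_univ]

theorem ncard_supp_sum_le {V W : Type*} [Finite V] [Finite W] {G : SimpleGraph V}
    {H : SimpleGraph W} {m : ℕ} (hG : ∀ c : G.ConnectedComponent, c.supp.ncard ≤ m)
    (hH : ∀ c : H.ConnectedComponent, c.supp.ncard ≤ m) (c : (G ⊕g H).ConnectedComponent) :
    c.supp.ncard ≤ m := by
  set f := Sum.map G.connectedComponentMk H.connectedComponentMk
  refine ncard_supp_le_of_forall_ncard_fiber_le (f := f) ?_ ?_ c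
  · rintro (u | u) (v | v) h
    · exact congrArg Sum.inl (SimpleGraph.ConnectedComponent.connectedComponentMk_eq_of_adj
        (SimpleGraph.sum_adj_inl.1 h))
    · cases h
    · cases h
    · exact congrArg Sum.inr (SimpleGraph.ConnectedComponent.connectedComponentMk_eq_of_adj
        (SimpleGraph.sum_adj_inr.1 h))
  · rintro (c | c)
    · have hfiber : f ⁻¹' {.inl c} = Sum.inl '' c.supp := by ext (v | v) <;> simp [f]
      rw [hfiber, Set.ncard_image_of_injective _ Sum.inl_injective]
      exact hG c
    · have hfiber : f ⁻¹' {.inr c} = Sum.inr '' c.supp := by ext (v | v) <;> simp [f]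
      rw [hfiber, Set.ncard_image_of_injective _ Sum.inr_injective]
      exact hH c

theorem exists_regular_forall_ncard_supp_le {p s : ℕ} (hp : 1 ≤ p) (hs : Even s)
    (hps : 2 * p * (p + 1) ≤ s) :
    ∃ (V : Type) (_ : Fintype V) (R : SimpleGraph V), Fintype.card V = s ∧
      (∀ v, (R.neighborSet v).ncard = p) ∧ ∀ c : R.ConnectedComponent, c.supp.ncard ≤ 2 * p := by
  obtain ⟨a, b, rfl⟩ := exists_eq_mul_succ_add_mul_two_mul hs hps
  refine ⟨Fin a × Fin (p + 1) ⊕ Fin b × (Fin p ⊕ Fin p), inferInstance,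
    ((⊥ : SimpleGraph (Fin a)) □ ⊤) ⊕g ((⊥ : SimpleGraph (Fin b)) □ completeBipartiteGraph _ _),
    by simp [two_mul], ?_, ncard_supp_sum_le (fun c => ?_) (fun c => ?_)⟩
  · rintro (⟨i, v⟩ | ⟨i, v⟩)
    · rw [SimpleGraph.neighborSet_sum_inl, Set.ncard_image_of_injective _ Sum.inl_injective,
        ncard_neighborSet_bot_boxProd, SimpleGraph.neighborSet_top, Set.ncard_compl,
        Set.ncard_singleton, Nat.card_fin, Nat.add_sub_cancel]
    · rw [SimpleGraph.neighborSet_sum_inr, Set.ncard_image_of_injective _ Sum.inr_injective,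
        ncard_neighborSet_bot_boxProd, ncard_neighborSet_completeBipartiteGraph_self, Nat.card_fin]
  · refine (ncard_supp_bot_boxProd_le _ c).trans ?_
    rw [Nat.card_fin]
    lia
  · refine (ncard_supp_bot_boxProd_le _ c).trans_eq ?_
    rw [Nat.card_sum, Nat.card_fin, two_mul]

end RegularGraph

section LowerBound

theorem adjForm_comap_comp {V W : Type*} [Fintype V] [Fintype W] (e : V ≃ W) (G : SimpleGraph W)
    (x : W → ℝ) : adjForm (G.comap e) (x ∘ e) = adjForm G x := by
  rw [adjForm, adjForm]
  exact Fintype.sum_equiv e _ _ fun u => Fintype.sum_equiv e _ _ fun v => rfl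

theorem ContainsCopy.of_comap {U V W : Type*} {F : SimpleGraph U} {G : SimpleGraph W} (f : V ↪ W)
    (h : ContainsCopy F (G.comap f)) : ContainsCopy F G := by
  obtain ⟨g, hg⟩ := h
  exact ⟨g.trans f, hg⟩

theorem adjForm_joinGraph_elim {α β : Type*} [Fintype α] [Fintype β] (R : SimpleGraph α)
    (F : SimpleGraph β) (x : α → ℝ) (y : β → ℝ) :
    adjForm (joinGraph R F) (Sum.elim x y) =
      adjForm R x + adjForm F y + 2 * ((∑ u, x u) * ∑ v, y v) := by
  classical
  simp only [adjForm, Fintype.sum_sum_type, Sum.elim_inl, Sum.elim_inr, joinGraph_adj_inl_inl,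
    joinGraph_adj_inr_inr, joinGraph_adj_inl_inr, joinGraph_adj_inr_inl, if_true,
    Finset.sum_add_distrib, ← Finset.mul_sum, ← Finset.sum_mul]
  ring

theorem exists_wheelFree_forall_form_le {k s t : ℕ} (hk : 2 ≤ k) (hs : Even s)
    (hks : 2 * (k - 1) * k ≤ s) (ht : 2 ≤ t) :
    ∃ H : SimpleGraph (Fin (s + t)), WheelFree (2 * k + 1) H ∧ ∀ x y : ℝ,
      (k - 1) * (s * x ^ 2) + 2 * y ^ 2 + 2 * (s * x * (t * y)) ≤
        lam1 H * (s * x ^ 2 + t * y ^ 2) := by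
  obtain ⟨V, _, R, hV, hR, hsupp⟩ := exists_regular_forall_ncard_supp_le (p := k - 1) (by lia) hs
    (by rwa [Nat.sub_add_cancel (by lia)])
  have : NeZero t := ⟨by lia⟩
  set F : SimpleGraph (Fin t) := SimpleGraph.edge ⟨0, by lia⟩ ⟨1, by lia⟩
  have hF : F.edgeSet = {s(⟨0, by lia⟩, ⟨1, by lia⟩)} :=
    SimpleGraph.edgeSet_edge_of_ne (by simp)
  have hwheel := not_containsCopy_wheelGraph_joinGraph (R := R) (F := F) hk
    (fun v => by rw [hR]; lia) (fun c => by have := hsupp c; lia)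
    (hF ▸ Set.subsingleton_singleton)
  let e : Fin (s + t) ≃ V ⊕ Fin t := Fintype.equivOfCardEq (by simp [hV])
  refine ⟨(joinGraph R F).comap e, fun h => hwheel (h.of_comap e.toEmbedding), fun x y => ?_⟩
  convert adjForm_le_lam1_mul ((joinGraph R F).comap e)
    (Sum.elim (fun _ => x) (fun _ => y) ∘ e) using 1
  · rw [adjForm_comap_comp, adjForm_joinGraph_elim, adjForm_const, adjForm_const,
      sum_ncard_neighborSet F, hF, Set.ncard_singleton]
    simp [hR, hV, Nat.cast_sub (show 1 ≤ k by lia)]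
    ring
  · have hsum := Equiv.sum_comp e fun v => Sum.elim (fun _ => x) (fun _ => y) v ^ 2
    simp only [Function.comp_apply, hsum]
    simp [hV]

theorem exists_wheelFree_blockRadius_add_le {k s t : ℕ} (hk : 2 ≤ k) (hs : Even s)
    (hks : 2 * (k - 1) * k ≤ s) (ht : 2 ≤ t) :
    ∃ H : SimpleGraph (Fin (s + t)), WheelFree (2 * k + 1) H ∧
      blockRadius (k - 1) 0 (s * t) +
        2 * s / (blockRadius (k - 1) 0 (s * t) ^ 2 + s * t) ≤ lam1 H := by
  obtain ⟨H, hH, hform⟩ := exists_wheelFree_forall_form_le hk hs hks ht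
  refine ⟨H, hH, ?_⟩
  have hspos : (0 : ℝ) < s := by
    have hkpos : 0 < k - 1 := by lia
    exact_mod_cast (show 0 < 2 * (k - 1) * k by positivity).trans_le hks
  have : NeZero t := ⟨by lia⟩
  set θ := blockRadius (k - 1) 0 (s * t)
  have hθ : (θ - (k - 1)) * (θ - 0) = s * t := blockRadius_sub_mul_sub (by positivity)
  rw [← le_sub_iff_add_le', div_le_iff₀ (by positivity)]
  refine le_of_mul_le_mul_left ?_ hspos
  -- `(θ, s)` is proportional to the top eigenvector of the quotient matrix `[[k - 1, t], [s, 0]]`.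
  linear_combination hform θ s + s * θ * hθ

theorem one_div_two_mul_sqrt_lt {d m s : ℝ} (hd : 0 ≤ d) (hm : 4 + 2 * d ≤ √m)
    (hs : √m ≤ s + 1) : 1 / (2 * √m) < 2 * s / (blockRadius d 0 m ^ 2 + m) := by
  have hpos : 0 < √m := by linarith
  have hm0 : 0 < m := Real.sqrt_pos.1 hpos
  have hθ := blockRadius_sub_mul_sub (a := d) (b := 0) hm0.le
  have hle := blockRadius_zero_right_le hd hm0.le
  rw [div_lt_div_iff₀ (by positivity) (by positivity)]
  nlinarith [Real.sq_sqrt hm0.le, mul_le_mul_of_nonneg_left hle hd,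
    mul_le_mul_of_nonneg_right hs hpos.le, mul_le_mul_of_nonneg_right hm hpos.le]

theorem exists_wheelFree_forall_blockRadius_add_lt {k n : ℕ} (hk : 2 ≤ k)
    (hn : 4 * k ^ 2 + 6 ≤ n) :
    ∃ H : SimpleGraph (Fin n), WheelFree (2 * k + 1) H ∧ ∀ a b : ℝ, 0 ≤ a → 0 ≤ b →
      a + b ≤ k - 1 → blockRadius a b ((n : ℝ) ^ 2 / 4) + (k - 1 - (a + b)) / 2 < lam1 H := by
  obtain ⟨s, t, rfl, hs, hst, hts⟩ : ∃ s t, n = s + t ∧ Even s ∧ s ≤ t + 2 ∧ t ≤ s + 2 :=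
    ⟨2 * ((n + 1) / 4), n - 2 * ((n + 1) / 4), by lia, even_two_mul _, by lia, by lia⟩
  have hks : 2 * (k - 1) * k ≤ s :=
    calc 2 * (k - 1) * k ≤ 2 * k * k := by gcongr; lia
      _ ≤ s := by lia
  obtain ⟨H, hH, hlam⟩ := exists_wheelFree_blockRadius_add_le hk hs hks (by lia : 2 ≤ t)
  refine ⟨H, hH, fun a b ha hb hab => ?_⟩
  rify at hk hn hst hts ⊢
  have hdiff : ((s : ℝ) - t) ^ 2 ≤ 2 ^ 2 := sq_le_sq' (by linarith) (by linarith)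
  have hprod : ((s : ℝ) + t) ^ 2 / 4 ≤ s * t + 1 := by linarith
  have hsqrt_ge : 4 + 2 * ((k : ℝ) - 1) ≤ √(s * t) := Real.le_sqrt_of_sq_le (by nlinarith)
  have hsqrt_le : √((s : ℝ) * t) ≤ s + 1 := Real.sqrt_le_iff.2 ⟨by positivity, by nlinarith⟩
  have hgain := one_div_two_mul_sqrt_lt (by linarith) hsqrt_ge hsqrt_le
  have hcmp := blockRadius_le_blockRadius_zero_right ha hb hab hprod
    (Real.sqrt_pos.1 (by linarith))
  linarith

end LowerBound

theorem internal_degree_sum_general (k C a b : ℕ) (hk : 2 ≤ k) :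
    ∃ N : ℕ, ∀ n : ℕ, N ≤ n → ∀ G : SimpleGraph (Fin n),
      (∀ H : SimpleGraph (Fin n), WheelFree (2 * k + 1) H → lam1 H ≤ lam1 G) →
      ∀ (S : Finset (Fin n)) (Es : Finset (Sym2 (Fin n))), Es.card ≤ C →
        (∀ v ∈ S, degIn (G.deleteEdges Es) S v ≤ a) →
        (∀ v ∈ Sᶜ, degIn (G.deleteEdges Es) Sᶜ v ≤ b) →
        k - 1 ≤ a + b ∧ (C = 0 → k ≤ a + b) := by
  refine ⟨4 * k ^ 2 + 16 * C + 6, fun n hn G hG S Es hEs hS hT => ?_⟩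
  rcases le_or_gt k (a + b) with hle | hlt
  · exact ⟨by lia, fun _ => hle⟩
  obtain ⟨j, rfl⟩ := Nat.exists_eq_add_of_lt hlt
  obtain ⟨H, hH, hHlam⟩ := exists_wheelFree_forall_blockRadius_add_lt hk (n := n) (by lia)
  have hGlam := lam1_le_blockRadius_add (by lia) hEs hS hT
  have hdefect : j * n < 16 * C := by
    have hgap := (hHlam a b a.cast_nonneg b.cast_nonneg (by push_cast; linarith)).trans_le
      ((hG H hH).trans hGlam)
    have hn0 : (0 : ℝ) < n := by exact_mod_cast (by lia : 0 < n)
    rw [add_lt_add_iff_left, lt_div_iff₀ hn0] at hgap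
    push_cast at hgap
    rify
    linarith
  have hj : j = 0 := by
    by_contra hj
    have := Nat.le_mul_of_pos_left n (Nat.pos_of_ne_zero hj)
    lia
  exact ⟨by lia, by rintro rfl; simp at hdefect⟩

/-- If at most `C` edges can be removed from `G` so that `G[S]` has
maximum degree at most `a` and `G[T]` has maximum degree at most `b`, then
`a + b ≥ k - 1`; and if `C = 0`, then `a + b ≥ k`. -/
theorem internal_degree_sum (k C a b : ℕ) (hk : 3 ≤ k) :
    ∃ N : ℕ, ∀ n : ℕ, N ≤ n → ∀ G : SimpleGraph (Fin n), IsSpexWheel (2 * k + 1) G →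
      ∀ S T : Finset (Fin n), IsMaxCut G S T →
        (∃ Es : Finset (Sym2 (Fin n)),
          Es ⊆ (by classical exact G.edgeFinset) ∧ Es.card ≤ C ∧
          (∀ v ∈ S, degIn (G.deleteEdges (↑Es : Set (Sym2 (Fin n)))) S v ≤ a) ∧
          (∀ v ∈ T, degIn (G.deleteEdges (↑Es : Set (Sym2 (Fin n)))) T v ≤ b)) →
        k - 1 ≤ a + b ∧ (C = 0 → k ≤ a + b) := by
  obtain ⟨N, hN⟩ := internal_degree_sum_general k C a b (by lia)
  refine ⟨N, fun n hn G hG S T hST ⟨Es, _, hEs, hS, hT⟩ => ?_⟩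
  exact hN n hn G hG.2 S Es hEs hS (hST.1 ▸ hT)
end

section
/- Let k ≥ 3 be an integer. For all sufficiently large n, if G is an n-vertex W_{2k+1}-free simple graph attaining the maximum spectral radius among all n-vertex W_{2k+1}-free graphs and V(G) = S ⊔ T is a maximum cut of G, then there exists a vertex v with internal degree at least k/2; that is, there is v ∈ S with 2·d_S(v) ≥ k or v ∈ T with 2·d_T(v) ≥ k. -/
/-!
If every internal degree of a partition `V = S ⊔ T` is at most `D`, then a positive vector constant
on `S` and on `T`, used as a test vector for the adjacency matrix, shows that the spectral radius
is at most `n / 2 + D`. Degrees below `k / 2` allow `D = (k - 1) / 2`.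

For the other direction, join a `(k - 1)`-regular graph whose components have fewer than `2k`
vertices to an independent set. A wheel `W_{2k+1}` in this join cannot have its hub in the
independent set, since the rim would be a `2k`-cycle in one component; and it cannot have its hub
on the other side, since a `2k`-cycle needs `k` vertices outside an independent set while the hub
has only `k - 1` neighbours there. When the sides have orders `a + b = n`, the join has an
eigenvalue `μ` with `(μ - (k - 1)) μ = a b`, and this exceeds `n / 2 + (k - 1) / 2` as soon as
`|a - b| < k - 1`.
-/

open Finset Matrix Module.End SimpleGraph

section Spectrum

variable {ι κ K : Type*} [Fintype ι] [DecidableEq ι] [Fintype κ] [DecidableEq κ]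

theorem norm_eigenvalue_le_of_weighted_row_sum_le [NormedField K] {A : Matrix ι ι K}
    {y : ι → ℝ} {c : ℝ} {μ : K} (hy : ∀ i, 0 < y i)
    (hA : ∀ i, ∑ j, ‖A i j‖ * y j ≤ c * y i) (hμ : HasEigenvalue (toLin' A) μ) : ‖μ‖ ≤ c := by
  obtain ⟨x, hx⟩ := hμ.exists_hasEigenvector
  obtain ⟨k, hk⟩ := Function.ne_iff.mp hx.2
  obtain ⟨i, -, hmax⟩ := exists_max_image univ (fun j => ‖x j‖ / y j) ⟨k, mem_univ k⟩
  have hxi : 0 < ‖x i‖ / y i :=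
    (div_pos (norm_pos_iff.mpr hk) (hy k)).trans_le (hmax k (mem_univ k))
  have hbound (j : ι) : ‖x j‖ ≤ ‖x i‖ / y i * y j := (div_le_iff₀ (hy j)).mp (hmax j (mem_univ j))
  have hrow : ∑ j, A i j * x j = μ * x i := congrFun hx.apply_eq_smul i
  refine le_of_mul_le_mul_right ?_ ((div_pos_iff_of_pos_right (hy i)).mp hxi)
  calc ‖μ‖ * ‖x i‖ = ‖∑ j, A i j * x j‖ := by rw [hrow, norm_mul]
    _ ≤ ∑ j, ‖A i j‖ * ‖x j‖ := (norm_sum_le _ _).trans_eq (by simp only [norm_mul])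
    _ ≤ ∑ j, ‖A i j‖ * (‖x i‖ / y i * y j) := by gcongr with j; exact hbound j
    _ = ‖x i‖ / y i * ∑ j, ‖A i j‖ * y j := by
        rw [mul_sum]; exact sum_congr rfl fun j _ => mul_left_comm _ _ _
    _ ≤ ‖x i‖ / y i * (c * y i) := by gcongr; exact hA i
    _ = c * ‖x i‖ := by have := (hy i).ne'; field_simp

theorem hasEigenvalue_reindex_iff [Field K] (e : ι ≃ κ) {A : Matrix ι ι K} {μ : K} :
    HasEigenvalue (toLin' (reindex e e A)) μ ↔ HasEigenvalue (toLin' A) μ := by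
  rw [hasEigenvalue_iff_mem_spectrum, hasEigenvalue_iff_mem_spectrum, spectrum_toLin',
    spectrum_toLin', ← coe_reindexAlgEquiv K K, AlgEquiv.spectrum_eq]

end Spectrum

section InternalDegree

variable {V : Type*} [Fintype V] [DecidableEq V] (G : SimpleGraph V) [DecidableRel G.Adj]

theorem sum_norm_adjMatrix_mul_ite_le {S : Finset V} {v : V} {D p q : ℝ} (hp : 0 ≤ p) (hq : 0 ≤ q)
    (hD : #{u ∈ S | G.Adj v u} ≤ D) :
    ∑ u, ‖G.adjMatrix ℝ v u‖ * (if u ∈ S then p else q) ≤ D * p + #Sᶜ * q := by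
  have hS : ∑ u ∈ S, ‖G.adjMatrix ℝ v u‖ * (if u ∈ S then p else q) =
      #{u ∈ S | G.Adj v u} * p := by
    rw [card_filter, Nat.cast_sum, sum_mul]
    refine sum_congr rfl fun u hu => ?_
    rw [if_pos hu, adjMatrix_apply]
    split_ifs <;> simp
  have hT : ∑ u ∈ Sᶜ, ‖G.adjMatrix ℝ v u‖ * (if u ∈ S then p else q) ≤ #Sᶜ * q := by
    rw [← nsmul_eq_mul]
    refine sum_le_card_nsmul _ _ _ fun u hu => ?_
    rw [if_neg (mem_compl.mp hu), adjMatrix_apply]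
    split_ifs <;> simp [hq]
  rw [← sum_add_sum_compl S, hS]
  gcongr

theorem eigenvalue_adjMatrix_le_of_internal_degree_le {S : Finset V} {D μ : ℝ}
    (hS : ∀ v ∈ S, #{u ∈ S | G.Adj v u} ≤ D) (hT : ∀ v ∈ Sᶜ, #{u ∈ Sᶜ | G.Adj v u} ≤ D)
    (hμ : HasEigenvalue (toLin' (G.adjMatrix ℝ)) μ) : μ ≤ Fintype.card V / 2 + D := by
  obtain ⟨x, hx⟩ := hμ.exists_hasEigenvector
  obtain ⟨v₀, -⟩ := Function.ne_iff.mp hx.2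
  have hV : (0 : ℝ) < Fintype.card V := mod_cast Fintype.card_pos_iff.mpr ⟨v₀⟩
  have hcard : (#S : ℝ) + #Sᶜ = Fintype.card V := mod_cast card_add_card_compl S
  set m : ℝ := Fintype.card V / 2 with hm
  have hprod : (#S : ℝ) * #Sᶜ ≤ m * m := by
    rw [hm, ← hcard]; nlinarith [sq_nonneg ((#S : ℝ) - #Sᶜ)]
  have hp : 0 < m + #Sᶜ := by positivity
  have hq : 0 < m + #S := by positivity
  -- With `c = |V| / 2`, the ratio of these weights is the mediant of `c / |T|` and `|S| / c`,
  -- which bounds both cross sums by `c` times the weight and stays positive when a side is empty.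
  refine (le_abs_self μ).trans <| norm_eigenvalue_le_of_weighted_row_sum_le
    (y := fun u => if u ∈ S then m + #Sᶜ else m + #S) (fun u => by split_ifs <;> assumption)
    (fun v => ?_) hμ
  by_cases hv : v ∈ S
  · have := sum_norm_adjMatrix_mul_ite_le G hp.le hq.le (hS v hv)
    rw [if_pos hv]
    linarith
  · have hv' : v ∈ Sᶜ := mem_compl.mpr hv
    have := sum_norm_adjMatrix_mul_ite_le G hq.le hp.le (hT v hv')
    simp only [mem_compl, ite_not, compl_compl] at this
    rw [if_neg hv]
    linarith

end InternalDegree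

section Join

variable {V W : Type*}

/-- The join of two graphs: their disjoint union together with all edges between them. It is
the shape of the comparison graphs in the lower bound on the extremal spectral radius. -/
def graphJoin (G : SimpleGraph V) (H : SimpleGraph W) : SimpleGraph (V ⊕ W) :=
  (G ⊕g H) ⊔ completeBipartiteGraph V W

variable {G : SimpleGraph V} {H : SimpleGraph W}

@[simp]
theorem graphJoin_adj_inl_inl {u v : V} : (graphJoin G H).Adj (.inl u) (.inl v) ↔ G.Adj u v := by
  simp [graphJoin]

@[simp]
theorem graphJoin_adj_inr_inr {u v : W} : (graphJoin G H).Adj (.inr u) (.inr v) ↔ H.Adj u v := by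
  simp [graphJoin]

@[simp]
theorem graphJoin_adj_inl_inr (v : V) (w : W) : (graphJoin G H).Adj (.inl v) (.inr w) := by
  simp [graphJoin]

theorem adjMatrix_graphJoin [DecidableRel G.Adj] [DecidableRel H.Adj]
    [DecidableRel (graphJoin G H).Adj] {α : Type*} [Zero α] [One α] :
    (graphJoin G H).adjMatrix α =
      fromBlocks (G.adjMatrix α) (of fun _ _ => 1) (of fun _ _ => 1) (H.adjMatrix α) := by
  ext (u | u) (v | v) <;> simp [adjMatrix_apply, adj_comm]

theorem hasEigenvalue_adjMatrix_graphJoin [Fintype V] [Fintype W] [DecidableEq V] [DecidableEq W]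
    [Nonempty V] [Nonempty W] [DecidableRel G.Adj] [DecidableRel H.Adj]
    [DecidableRel (graphJoin G H).Adj] {K : Type*} [Field K] [CharZero K] {d e : ℕ} {μ : K}
    (hG : G.IsRegularOfDegree d) (hH : H.IsRegularOfDegree e)
    (hμ : (μ - d) * (μ - e) = Fintype.card V * Fintype.card W) :
    HasEigenvalue (toLin' ((graphJoin G H).adjMatrix K)) μ := by
  refine hasEigenvalue_of_hasEigenvector
    (x := Sum.elim (fun _ => μ - e) (fun _ => (Fintype.card V : K)))
    (hasEigenvector_iff.mpr ⟨mem_eigenspace_iff.mpr ?_, fun h => ?_⟩)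
  · rw [toLin'_apply, adjMatrix_graphJoin, fromBlocks_mulVec]
    ext (v | w)
    · have hv : (G.adjMatrix K *ᵥ Function.const V (μ - e)) v = d * (μ - e) :=
        adjMatrix_mulVec_const_apply_of_regular hG
      simp only [mulVec, dotProduct, Function.const_apply, Sum.elim_comp_inl, Sum.elim_comp_inr,
        Sum.elim_inl, Pi.add_apply, Pi.smul_apply, of_apply, sum_const, card_univ, nsmul_eq_mul,
        smul_eq_mul, one_mul] at hv ⊢
      linear_combination hv - hμ
    · have hw : (H.adjMatrix K *ᵥ Function.const W (Fintype.card V : K)) w = e * Fintype.card V :=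
        adjMatrix_mulVec_const_apply_of_regular hH
      simp only [mulVec, dotProduct, Function.const_apply, Sum.elim_comp_inl, Sum.elim_comp_inr,
        Sum.elim_inr, Pi.add_apply, Pi.smul_apply, of_apply, sum_const, card_univ, nsmul_eq_mul,
        smul_eq_mul, one_mul] at hw ⊢
      linear_combination hw
  · obtain ⟨w⟩ := ‹Nonempty W›
    simpa using congrFun h (.inr w)

end Join

section Containment

variable {V W X ι : Type*} {F : SimpleGraph V} {G : SimpleGraph W} {H : SimpleGraph X}

theorem isContained_of_range_subset (f : Copy F H) (e : G ↪g H)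
    (h : Set.range f ⊆ Set.range e) : F ⊑ G := by
  choose g hg using fun v => h (Set.mem_range_self v)
  refine ⟨⟨⟨g, fun {u v} huv => ?_⟩, fun u v huv => f.injective ?_⟩⟩
  · rw [← e.map_adj_iff, hg, hg]
    exact f.toHom.map_adj huv
  · change g u = g v at huv
    change f u = f v
    rw [← hg, ← hg, huv]

theorem apply_eq_of_reachable {c : V → ι} (hc : ∀ u v, F.Adj u v → c u = c v) {u v : V}
    (h : F.Reachable u v) : c u = c v := by
  obtain ⟨p⟩ := h
  induction p with
  | nil => rfl
  | cons huv _ ih => exact (hc _ _ huv).trans ih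

theorem free_sum (hF : F.Preconnected) (hG : F.Free G) (hH : F.Free H) : F.Free (G ⊕g H) := by
  rintro ⟨f⟩
  have hside (u v : V) : (f u).isLeft = (f v).isLeft := by
    refine apply_eq_of_reachable (c := fun v => (f v).isLeft) (fun u v huv => ?_) (hF u v)
    have hadj := f.toHom.map_adj huv
    change (G ⊕g H).Adj (f u) (f v) at hadj
    rcases hu : f u <;> rcases hv : f v <;> simp [hu, hv] at hadj ⊢
  by_cases hleft : ∃ u, (f u).isLeft
  · obtain ⟨u, hu⟩ := hleft
    refine hG (isContained_of_range_subset f Embedding.sumInl ?_)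
    rintro _ ⟨v, rfl⟩
    obtain ⟨w, hw⟩ := Sum.isLeft_iff.mp ((hside v u).trans hu)
    exact ⟨w, hw.symm⟩
  · push Not at hleft
    refine hH (isContained_of_range_subset f Embedding.sumInr ?_)
    rintro _ ⟨v, rfl⟩
    obtain ⟨w, hw⟩ := Sum.isRight_iff.mp (Sum.not_isLeft.mp (hleft v))
    exact ⟨w, hw.symm⟩

theorem free_bot_boxProd [Nonempty V] (hF : F.Preconnected) (hG : F.Free G) :
    F.Free ((⊥ : SimpleGraph ι) □ G) := by
  rintro ⟨f⟩
  obtain ⟨u⟩ := ‹Nonempty V›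
  refine hG (isContained_of_range_subset f (boxProdRight ⊥ G (f u).1) ?_)
  rintro _ ⟨v, rfl⟩
  have hfst : (f u).1 = (f v).1 := by
    refine apply_eq_of_reachable (c := fun v => (f v).1) (fun v w hvw => ?_) (hF u v)
    have hadj := boxProd_adj.mp (f.toHom.map_adj hvw)
    exact hadj.elim (fun h => h.1.elim) And.right
  exact ⟨(f v).2, Prod.ext hfst rfl⟩

theorem free_of_card_lt [Fintype V] [Fintype W] (h : Fintype.card W < Fintype.card V) :
    F.Free G :=
  fun ⟨f⟩ => h.not_ge (Fintype.card_le_of_injective f f.injective)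

end Containment

section Wheel

theorem containsCopy_iff_isContained {α β : Type*} {F : SimpleGraph α} {G : SimpleGraph β} :
    ContainsCopy F G ↔ F ⊑ G :=
  ⟨fun ⟨f, hf⟩ => ⟨⟨⟨f, fun {a b} => hf a b⟩, f.injective⟩⟩,
    fun ⟨f⟩ => ⟨f.toEmbedding, fun _ _ h => f.toHom.map_adj h⟩⟩

theorem wheelGraph_adj_zero_succ {t : ℕ} (i : Fin t) : (wheelGraph (t + 1)).Adj 0 i.succ :=
  ⟨(Fin.succ_ne_zero i).symm, Or.inl rfl⟩

theorem wheelGraph_adj_succ_succ {t : ℕ} {i j : Fin t} (h : (cycleGraph t).Adj i j) :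
    (wheelGraph (t + 1)).Adj i.succ j.succ := by
  refine ⟨fun hij => h.ne (Fin.succ_injective _ hij), ?_⟩
  have hij := Fin.intCast_val_sub_eq_sub_add_ite i j
  have hji := Fin.intCast_val_sub_eq_sub_add_ite j i
  rw [cycleGraph_adj'] at h
  simp only [Fin.val_succ, Fin.le_def] at hij hji ⊢
  split_ifs at hij hji <;> omega

theorem le_card_of_isVertexCover_cycleGraph {k : ℕ} {s : Finset (Fin (2 * k))}
    (hs : (cycleGraph (2 * k)).IsVertexCover s) : k ≤ #s := by
  have hsurj : Set.SurjOn (fun i : Fin (2 * k) => i.val / 2) s (range k) := by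
    intro j hj
    have hj : j < k := by simpa using hj
    have hadj : (cycleGraph (2 * k)).Adj ⟨2 * j, by lia⟩ ⟨2 * j + 1, by lia⟩ :=
      pathGraph_le_cycleGraph (pathGraph_adj.mpr (.inl rfl))
    rcases hs hadj with h | h
    · exact ⟨_, h, by simp⟩
    · exact ⟨_, h, by simp; lia⟩
  simpa using card_le_card_of_surjOn _ hsurj

section JoinWithIndependentSet

variable {V W : Type*} {G : SimpleGraph V}

theorem le_degree_of_forall_adj_inl {k : ℕ} {v : V} [Fintype (G.neighborSet v)]
    (f : Copy (cycleGraph (2 * k)) (graphJoin G (⊥ : SimpleGraph W)))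
    (hf : ∀ i, (graphJoin G (⊥ : SimpleGraph W)).Adj (.inl v) (f i)) : k ≤ G.degree v := by
  classical
  let s : Finset (Fin (2 * k)) := {i | (f i).isLeft}
  have hcover : (cycleGraph (2 * k)).IsVertexCover s := by
    intro i j hij
    have hadj : (graphJoin G (⊥ : SimpleGraph W)).Adj (f i) (f j) := f.toHom.map_adj hij
    rcases hi : f i <;> rcases hj : f j <;> simp [s, hi, hj] at hadj ⊢
  have hsub : s.image f ⊆ (G.neighborFinset v).map .inl := by
    intro x hx
    obtain ⟨i, hi, rfl⟩ := mem_image.mp hx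
    obtain ⟨u, hu⟩ := Sum.isLeft_iff.mp (mem_filter.mp hi).2
    simpa [hu] using hf i
  calc k ≤ #s := le_card_of_isVertexCover_cycleGraph hcover
    _ = #(s.image f) := (card_image_of_injective s f.injective).symm
    _ ≤ #((G.neighborFinset v).map .inl) := card_le_card hsub
    _ = G.degree v := by rw [card_map, card_neighborFinset_eq_degree]

theorem isContained_of_forall_adj_inr {X : Type*} {F : SimpleGraph X} {w : W}
    (f : Copy F (graphJoin G (⊥ : SimpleGraph W)))
    (hf : ∀ x, (graphJoin G (⊥ : SimpleGraph W)).Adj (.inr w) (f x)) : F ⊑ G := by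
  refine isContained_of_range_subset f ⟨.inl, graphJoin_adj_inl_inl⟩ ?_
  rintro _ ⟨x, rfl⟩
  have hadj := hf x
  rcases hx : f x with u | u
  · exact ⟨u, rfl⟩
  · rw [hx, graphJoin_adj_inr_inr] at hadj
    exact hadj.elim

theorem wheelGraph_free_graphJoin_bot [LocallyFinite G] {k : ℕ}
    (hdeg : ∀ v, G.degree v < k) (hG : (cycleGraph (2 * k)).Free G) :
    (wheelGraph (2 * k + 1)).Free (graphJoin G (⊥ : SimpleGraph W)) := by
  rintro ⟨f⟩
  let rim : Copy (cycleGraph (2 * k)) (graphJoin G (⊥ : SimpleGraph W)) :=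
    ⟨⟨fun i => f i.succ, fun hij => f.toHom.map_adj (wheelGraph_adj_succ_succ hij)⟩,
      f.injective.comp (Fin.succ_injective _)⟩
  have hspoke (i : Fin (2 * k)) : (graphJoin G (⊥ : SimpleGraph W)).Adj (f 0) (rim i) :=
    f.toHom.map_adj (wheelGraph_adj_zero_succ i)
  rcases hhub : f 0 with v | w
  · exact (hdeg v).not_ge (le_degree_of_forall_adj_inl rim fun i => hhub ▸ hspoke i)
  · exact hG (isContained_of_forall_adj_inr rim fun i => hhub ▸ hspoke i)

end JoinWithIndependentSet

end Wheel

section Blocks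

variable {V W : Type*} {G : SimpleGraph V} {H : SimpleGraph W}

theorem isRegularOfDegree_sum [LocallyFinite G] [LocallyFinite H] [LocallyFinite (G ⊕g H)] {d : ℕ}
    (hG : G.IsRegularOfDegree d) (hH : H.IsRegularOfDegree d) :
    (G ⊕g H).IsRegularOfDegree d := by
  rintro (v | w)
  · have hmap : (G ⊕g H).neighborFinset (.inl v) = (G.neighborFinset v).map .inl := by
      ext (u | u) <;> simp
    rw [← card_neighborFinset_eq_degree, hmap, card_map, card_neighborFinset_eq_degree, hG v]
  · have hmap : (G ⊕g H).neighborFinset (.inr w) = (H.neighborFinset w).map .inr := by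
      ext (u | u) <;> simp
    rw [← card_neighborFinset_eq_degree, hmap, card_map, card_neighborFinset_eq_degree, hH w]

theorem isRegularOfDegree_boxProd [LocallyFinite G] [LocallyFinite H] [LocallyFinite (G □ H)]
    {d e : ℕ} (hG : G.IsRegularOfDegree d) (hH : H.IsRegularOfDegree e) :
    (G □ H).IsRegularOfDegree (d + e) :=
  fun v => by rw [degree_boxProd, hG, hH]

/-- The disjoint union of `x` copies of the complete graph `K_k` and `y` copies of the complement
of the cycle `C_{k+2}`. For `3 ≤ k` its components are `(k - 1)`-regular on fewer than `2k`
vertices, and varying `x` and `y` realizes every large order divisible by `gcd (k, 2)`. -/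
def blockGraph (k x y : ℕ) : SimpleGraph ((Fin x × Fin k) ⊕ (Fin y × Fin (k + 2))) :=
  ((⊥ : SimpleGraph (Fin x)) □ (⊤ : SimpleGraph (Fin k))) ⊕g
    ((⊥ : SimpleGraph (Fin y)) □ (cycleGraph (k + 2))ᶜ)

theorem isRegularOfDegree_blockGraph {k : ℕ} (hk : 0 < k) (x y : ℕ)
    [LocallyFinite (blockGraph k x y)] : (blockGraph k x y).IsRegularOfDegree (k - 1) := by
  classical
  obtain ⟨k, rfl⟩ := Nat.exists_eq_add_of_le' hk
  have hcycle : (cycleGraph (k + 1 + 2)).IsRegularOfDegree 2 := fun _ => cycleGraph_degree_three_le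
  have hcliques : ((⊥ : SimpleGraph (Fin x)) □ (⊤ : SimpleGraph (Fin (k + 1)))).IsRegularOfDegree
      k := by
    simpa using isRegularOfDegree_boxProd (G := (⊥ : SimpleGraph (Fin x))) .bot
      (IsRegularOfDegree.top (V := Fin (k + 1)))
  have hcompls : ((⊥ : SimpleGraph (Fin y)) □ (cycleGraph (k + 1 + 2))ᶜ).IsRegularOfDegree k := by
    simpa using isRegularOfDegree_boxProd (G := (⊥ : SimpleGraph (Fin y))) .bot hcycle.compl
  convert isRegularOfDegree_sum hcliques hcompls <;> rfl

theorem cycleGraph_free_blockGraph {k : ℕ} (hk : 3 ≤ k) (x y : ℕ) :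
    (cycleGraph (2 * k)).Free (blockGraph k x y) := by
  have : Nonempty (Fin (2 * k)) := ⟨⟨0, by lia⟩⟩
  refine free_sum cycleGraph_preconnected ?_ ?_ <;>
    refine free_bot_boxProd cycleGraph_preconnected (free_of_card_lt ?_) <;>
    simp only [Fintype.card_fin] <;> lia

end Blocks

section Arithmetic

theorem exists_gcd_two_dvd_near_half {k : ℕ} (hk : 3 ≤ k) (n : ℕ) :
    ∃ a, k.gcd 2 ∣ a ∧ 2 * a < n + (k - 1) ∧ n < 2 * a + (k - 1) := by
  rcases k.even_or_odd with hpar | hpar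
  · refine ⟨2 * ((n + 1) / 4), (Nat.gcd_dvd_right k 2).mul_right _, ?_⟩
    have := hpar.two_dvd
    lia
  · exact ⟨n / 2, by simp [Nat.coprime_two_right.mpr hpar |>.gcd_eq_one], by lia, by lia⟩

theorem exists_balanced_block_split {k n : ℕ} (hk : 3 ≤ k) (hn : 3 * k ^ 2 ≤ n) :
    ∃ x y b : ℕ, 0 < x * k + y * (k + 2) ∧ 0 < b ∧ x * k + y * (k + 2) + b = n ∧
      |((x * k + y * (k + 2) : ℕ) : ℝ) - b| < (k - 1 : ℕ) := by
  obtain ⟨a, hdvd, hlt, hgt⟩ := exists_gcd_two_dvd_near_half hk n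
  have hk2 : 3 * k ≤ k ^ 2 := by rw [sq]; gcongr
  have hlarge : k ^ 2 ≤ a := by lia
  obtain ⟨x, y, rfl⟩ : ∃ x y, x * k + y * (k + 2) = a := by
    refine Nat.exists_add_mul_eq_of_gcd_dvd_of_mul_pred_le k (k + 2) a (by simpa using hdvd) ?_
    refine le_trans ?_ hlarge
    obtain ⟨k, rfl⟩ := Nat.exists_eq_add_of_le' hk
    simp only [Nat.pred_eq_sub_one, Nat.add_succ_sub_one]
    nlinarith
  obtain ⟨b, rfl⟩ : ∃ b, n = x * k + y * (k + 2) + b := Nat.exists_eq_add_of_le (by lia)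
  refine ⟨x, y, b, by lia, by lia, rfl, ?_⟩
  rw [abs_sub_lt_iff, sub_lt_iff_lt_add', sub_lt_iff_lt_add']
  exact_mod_cast (by lia : _ ∧ _)

theorem exists_mul_eq_of_abs_sub_lt {a b d : ℝ} (h : |a - b| < d) :
    ∃ μ, (a + b + d) / 2 < μ ∧ (μ - d) * μ = a * b := by
  have hsq : (a + b) ^ 2 < d ^ 2 + 4 * a * b := by
    linarith [sq_lt_sq' (abs_lt.mp h).1 (abs_lt.mp h).2, sub_sq a b, add_sq a b]
  have hsqrt : √(d ^ 2 + 4 * a * b) ^ 2 = d ^ 2 + 4 * a * b :=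
    Real.sq_sqrt ((sq_nonneg _).trans hsq.le)
  refine ⟨(d + √(d ^ 2 + 4 * a * b)) / 2, ?_, ?_⟩
  · linarith [Real.lt_sqrt_of_sq_lt hsq]
  · linear_combination hsqrt / 4

end Arithmetic

section SpectralRadius

theorem lam1_le_of_degIn_le {n : ℕ} {G : SimpleGraph (Fin n)} {S : Finset (Fin n)} {D : ℝ}
    (hD : 0 ≤ D) (hS : ∀ v ∈ S, degIn G S v ≤ D) (hT : ∀ v ∈ Sᶜ, degIn G Sᶜ v ≤ D) :
    lam1 G ≤ n / 2 + D := by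
  classical
  refine Real.sSup_le (fun μ hμ => ?_) (by positivity)
  simpa using eigenvalue_adjMatrix_le_of_internal_degree_le G hS hT hμ

theorem le_lam1_of_iso {V : Type*} [Fintype V] [DecidableEq V] {G : SimpleGraph V}
    [DecidableRel G.Adj] {n : ℕ} {H : SimpleGraph (Fin n)} (e : G ≃g H) {μ : ℝ}
    (hμ : HasEigenvalue (toLin' (G.adjMatrix ℝ)) μ) : μ ≤ lam1 H := by
  classical
  refine le_csSup (finite_hasEigenvalue _).bddAbove ?_
  change HasEigenvalue (toLin' (H.adjMatrix ℝ)) μ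
  rw [← e.reindex_adjMatrix (α := ℝ)]
  exact (hasEigenvalue_reindex_iff e.toEquiv).mpr hμ

theorem exists_wheelFree_lt_lam1 {k n : ℕ} (hk : 3 ≤ k) (hn : 3 * k ^ 2 ≤ n) :
    ∃ H : SimpleGraph (Fin n), WheelFree (2 * k + 1) H ∧
      (n : ℝ) / 2 + (k - 1 : ℕ) / 2 < lam1 H := by
  classical
  obtain ⟨x, y, b, ha, hb, hsum, hbal⟩ := exists_balanced_block_split hk hn
  obtain ⟨μ, hμ, hroot⟩ := exists_mul_eq_of_abs_sub_lt hbal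
  let B := blockGraph k x y
  let J := graphJoin B (⊥ : SimpleGraph (Fin b))
  have hcard : Fintype.card ((Fin x × Fin k) ⊕ (Fin y × Fin (k + 2))) = x * k + y * (k + 2) := by
    simp
  have hreg : B.IsRegularOfDegree (k - 1) := isRegularOfDegree_blockGraph (by lia) x y
  have hfree : (wheelGraph (2 * k + 1)).Free J :=
    wheelGraph_free_graphJoin_bot (fun v => (hreg v).trans_lt (by lia))
      (cycleGraph_free_blockGraph hk x y)
  have : Nonempty ((Fin x × Fin k) ⊕ (Fin y × Fin (k + 2))) :=
    Fintype.card_pos_iff.mp (ha.trans_eq hcard.symm)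
  have : Nonempty (Fin b) := ⟨⟨0, hb⟩⟩
  have heig : HasEigenvalue (toLin' (J.adjMatrix ℝ)) μ :=
    hasEigenvalue_adjMatrix_graphJoin hreg .bot <| by
      rw [hcard, Fintype.card_fin, Nat.cast_zero, sub_zero, hroot]
  let e := J.overFinIso (n := n) (by rw [Fintype.card_sum, hcard, Fintype.card_fin, hsum])
  refine ⟨_, containsCopy_iff_isContained.not.mpr ((free_congr_right e).mp hfree), ?_⟩
  refine lt_of_lt_of_le ?_ (le_lam1_of_iso e heig)
  rwa [← add_div, ← hsum, Nat.cast_add]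

end SpectralRadius

theorem exists_internal_degree_half_general {k n : ℕ} (hk : 3 ≤ k) (hn : 3 * k ^ 2 ≤ n)
    (G : SimpleGraph (Fin n))
    (hG : ∀ H : SimpleGraph (Fin n), WheelFree (2 * k + 1) H → lam1 H ≤ lam1 G)
    (S : Finset (Fin n)) :
    ∃ v, (v ∈ S ∧ k ≤ 2 * degIn G S v) ∨ (v ∈ Sᶜ ∧ k ≤ 2 * degIn G Sᶜ v) := by
  obtain ⟨H, hfree, hlt⟩ := exists_wheelFree_lt_lam1 hk hn
  by_contra! hsmall
  have hhalf {m : ℕ} (hm : 2 * m < k) : (m : ℝ) ≤ (k - 1 : ℕ) / 2 := by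
    rw [le_div_iff₀ two_pos]
    exact_mod_cast (by lia : m * 2 ≤ k - 1)
  have hle : lam1 G ≤ n / 2 + (k - 1 : ℕ) / 2 :=
    lam1_le_of_degIn_le (by positivity) (fun v hv => hhalf ((hsmall v).1 hv))
      (fun v hv => hhalf ((hsmall v).2 hv))
  exact (hlt.trans_le (hG H hfree)).not_ge hle

/-- There is a vertex of internal degree at least `k/2`. -/
theorem exists_internal_degree_half (k : ℕ) (hk : 3 ≤ k) :
    ∃ N : ℕ, ∀ n : ℕ, N ≤ n → ∀ G : SimpleGraph (Fin n), IsSpexWheel (2 * k + 1) G →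
      ∀ S T : Finset (Fin n), IsMaxCut G S T →
        ∃ v : Fin n, (v ∈ S ∧ k ≤ 2 * degIn G S v) ∨ (v ∈ T ∧ k ≤ 2 * degIn G T v) := by
  refine ⟨3 * k ^ 2, fun n hn G hG S T hST => ?_⟩
  rw [hST.1]
  exact exists_internal_degree_half_general hk hn G hG.2 S
end
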